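/- Let G be a finite simple graph with a perfect matching and let M be a perfect matching of G. Then every vertex v in V_SD(G) belongs to some M-Jposy (i.e., a Jposy with respect to this particular perfect matching M). -/

import Mathlib

open SimpleGraph

variable {V : Type*} [Fintype V] [DecidableEq V]

/-- `M` is a matching of `G`: a set of edges of `G` that are pairwise nonadjacent
(no two distinct edges of `M` share an endpoint). -/
def IsMatching' (G : SimpleGraph V) (M : Finset (Sym2 V)) : Prop :=
  (∀ e ∈ M, e ∈ G.edgeSet) ∧
  ∀ e ∈ M, ∀ f ∈ M, e ≠ f → ∀ x : V, x ∈ e → x ∉ f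

/-- A matching is perfect if every vertex is an endpoint of some edge of `M`. -/
def IsPerfectMatching' (G : SimpleGraph V) (M : Finset (Sym2 V)) : Prop :=
  IsMatching' G M ∧ ∀ v : V, ∃ e ∈ M, v ∈ e

/-- A matching is maximum if it has the largest possible cardinality among matchings. -/
def IsMaximumMatching' (G : SimpleGraph V) (M : Finset (Sym2 V)) : Prop :=
  IsMatching' G M ∧ ∀ N : Finset (Sym2 V), IsMatching' G N → N.card ≤ M.card

/-- A walk is `M`-alternating: for each pair of consecutive edges of the walk,
exactly one of them belongs to `M`. -/
def IsAltWalk {G : SimpleGraph V} (M : Finset (Sym2 V)) {u v : V} (w : G.Walk u v) : Prop :=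
  List.Chain' (fun e f => (e ∈ M ↔ f ∉ M)) w.edges

/-- A walk is `M`-mm-alternating: it is `M`-alternating and its first and last
edges belong to `M` (in particular the walk has at least one edge). -/
def IsMMAltWalk {G : SimpleGraph V} (M : Finset (Sym2 V)) {u v : V} (w : G.Walk u v) : Prop :=
  IsAltWalk M w ∧ (∃ e, w.edges.head? = some e ∧ e ∈ M) ∧
    (∃ e, w.edges.getLast? = some e ∧ e ∈ M)

/-- A walk is `M`-nn-alternating: it is `M`-alternating and its first and last
edges do not belong to `M`. -/
def IsNNAltWalk {G : SimpleGraph V} (M : Finset (Sym2 V)) {u v : V} (w : G.Walk u v) : Prop :=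
  IsAltWalk M w ∧ (∃ e, w.edges.head? = some e ∧ e ∉ M) ∧
    (∃ e, w.edges.getLast? = some e ∧ e ∉ M)

/-- The reachable set `R(M, v)`: vertices `u` admitting an `M`-mm-alternating walk
from `v` to `u`. -/
def Reach (G : SimpleGraph V) (M : Finset (Sym2 V)) (v : V) : Set V :=
  {u | ∃ w : G.Walk v u, IsMMAltWalk M w}

/-- `c` is an `M`-blossom with base `b`: an odd cycle of length `2k+1` containing
exactly `k` edges of `M`, whose base `b` is not matched by `M` within the cycle. -/
def IsBlossom (G : SimpleGraph V) (M : Finset (Sym2 V)) {b : V} (c : G.Walk b b) : Prop :=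
  c.IsCycle ∧ Odd c.length ∧
  2 * (c.edges.countP (fun e => decide (e ∈ M))) + 1 = c.length ∧
  ∀ e ∈ c.edges, e ∈ M → b ∉ e

/-- An `M`-Jposy: two (not necessarily distinct) `M`-blossoms joined by an
odd-length `M`-alternating walk whose endpoints are the bases of the blossoms. -/
structure Jposy (G : SimpleGraph V) (M : Finset (Sym2 V)) where
  b₁ : V
  b₂ : V
  c₁ : G.Walk b₁ b₁
  c₂ : G.Walk b₂ b₂
  walk : G.Walk b₁ b₂
  blossom₁ : IsBlossom G M c₁
  blossom₂ : IsBlossom G M c₂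
  odd : Odd walk.length
  alt : IsAltWalk M walk

/-- The vertices of a Jposy: the vertices of its two blossoms and of its joining walk. -/
def Jposy.verts {G : SimpleGraph V} {M : Finset (Sym2 V)} (J : Jposy G M) : Set V :=
  {v | v ∈ J.c₁.support ∨ v ∈ J.c₂.support ∨ v ∈ J.walk.support}

/-- `v` belongs to some `M`-Jposy of `G`. -/
def InJposy (G : SimpleGraph V) (M : Finset (Sym2 V)) (v : V) : Prop :=
  ∃ J : Jposy G M, v ∈ J.verts

/-- `V_SD(G)`: vertices belonging to an `M`-Jposy for some maximum matching `M` of `G`. -/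
def VSD (G : SimpleGraph V) : Set V :=
  {v | ∃ M : Finset (Sym2 V), IsMaximumMatching' G M ∧ InJposy G M v}

/-!
Call a matching edge followed by a non-matching one an alternating step. Since alternating cycles
can be traversed all the way round, which vertices reach which by alternating steps does not depend
on the perfect matching, and up to the resulting equivalence (reachability both ways) all perfect
matchings have the same partner function. The vertices of Jposies are those lying, in
this preorder, between the partner of a blossom base and a blossom base, so it suffices that every
base `b` of one perfect matching is equivalent to a base of any other.

If `b` is equivalent to its partner, a closed alternating walk through both contains a blossom, as
in Edmonds' algorithm. Otherwise cut out of the blossom a segment whose interior avoids the classes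
of `b` and of its partner and whose ends lie in these two classes. Joining the ends of the interior
by a new edge and rematching along it gives a perfect matching, whose symmetric difference with the
other perfect matching contains an alternating path with the same ends. That path closes up to an
alternating walk between the two classes, which again contains a blossom.
-/

open Relation

section Reachability

variable {α : Type*} {G : SimpleGraph α} {f g : Equiv.Perm α} {x y z : α}

/-- A perfect matching of `G`, encoded as the involution exchanging the two ends of each of its
edges. -/
structure IsMatchingPerm (G : SimpleGraph α) (f : Equiv.Perm α) : Prop where
  involutive : Function.Involutive f
  adj (x : α) : G.Adj x (f x)

/-- The alternating step digraph of the perfect matching `f`: cross the matching edge from `x`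
to `f x`, then a non-matching edge from `f x` to `y`. Its walks record every other vertex of the
alternating walks of `G` that start with a matching edge and end with a non-matching one. -/
def AltStep (G : SimpleGraph α) (f : Equiv.Perm α) (x y : α) : Prop :=
  G.Adj (f x) y ∧ y ≠ x

/-- Equivalence of vertices in the alternating step digraph: the classes are its strong
components. -/
def AltEquiv (G : SimpleGraph α) (f : Equiv.Perm α) : α → α → Prop :=
  AntisymmRel (ReflTransGen (AltStep G f))

namespace IsMatchingPerm

theorem apply_ne (hf : IsMatchingPerm G f) (x : α) : f x ≠ x :=
  (hf.adj x).ne'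

theorem altStep_contra (hf : IsMatchingPerm G f) (h : AltStep G f x y) :
    AltStep G f (f y) (f x) :=
  ⟨by simpa only [hf.involutive y] using h.1.symm, f.injective.ne h.2.symm⟩

theorem transGen_contra (hf : IsMatchingPerm G f) (h : TransGen (AltStep G f) x y) :
    TransGen (AltStep G f) (f y) (f x) :=
  TransGen.lift f (fun _ _ => hf.altStep_contra) _ _ h.swap

theorem reflTransGen_contra (hf : IsMatchingPerm G f) (h : ReflTransGen (AltStep G f) x y) :
    ReflTransGen (AltStep G f) (f y) (f x) :=
  ReflTransGen.lift f (fun _ _ => hf.altStep_contra) _ _ h.swap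

theorem altEquiv_contra (hf : IsMatchingPerm G f) (h : AltEquiv G f x y) :
    AltEquiv G f (f x) (f y) :=
  ⟨hf.reflTransGen_contra h.2, hf.reflTransGen_contra h.1⟩

theorem reflTransGen_apply_apply (hf : IsMatchingPerm G f) (x : α) :
    ReflTransGen (AltStep G g) x (f (g x)) := by
  by_cases h : f (g x) = x
  · rw [h]
  · exact .single ⟨hf.adj (g x), h⟩

theorem reflTransGen_pow_apply (hf : IsMatchingPerm G f) (x : α) (n : ℕ) :
    ReflTransGen (AltStep G g) x (((f * g) ^ n) x) := by
  induction n with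
  | zero => exact .refl
  | succ n ih =>
    rw [pow_succ']
    exact ih.trans (hf.reflTransGen_apply_apply _)

-- `g * f` is the inverse of `f * g`, hence a natural power of it.
theorem reflTransGen_apply_apply' [Finite α] (hf : IsMatchingPerm G f) (hg : IsMatchingPerm G g)
    (x : α) : ReflTransGen (AltStep G g) x (g (f x)) := by
  have hcycle : (f * g).SameCycle (g (f x)) x :=
    ⟨1, by simp [hf.involutive _, hg.involutive _]⟩
  obtain ⟨n, hn⟩ := hcycle.symm.exists_nat_pow_eq
  exact hn ▸ hf.reflTransGen_pow_apply x n

theorem transGen_of_altStep [Finite α] (hf : IsMatchingPerm G f) (hg : IsMatchingPerm G g)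
    (h : AltStep G f x y) : TransGen (AltStep G g) x y := by
  have hx := hf.reflTransGen_apply_apply' hg x
  by_cases hy : y = g (f x)
  · exact (reflTransGen_iff_eq_or_transGen.1 (hy ▸ hx)).resolve_left h.2
  · exact .tail' hx ⟨by simpa only [hg.involutive _] using h.1, hy⟩

theorem transGen_altStep_eq [Finite α] (hf : IsMatchingPerm G f) (hg : IsMatchingPerm G g) :
    TransGen (AltStep G f) = TransGen (AltStep G g) :=
  le_antisymm (TransGen.closed fun _ _ => hf.transGen_of_altStep hg)
    (TransGen.closed fun _ _ => hg.transGen_of_altStep hf)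

theorem reflTransGen_altStep_eq [Finite α] (hf : IsMatchingPerm G f) (hg : IsMatchingPerm G g) :
    ReflTransGen (AltStep G f) = ReflTransGen (AltStep G g) := by
  rw [← reflGen_transGen, hf.transGen_altStep_eq hg, reflGen_transGen]

theorem altEquiv_eq [Finite α] (hf : IsMatchingPerm G f) (hg : IsMatchingPerm G g) :
    AltEquiv G f = AltEquiv G g := by
  rw [AltEquiv, hf.reflTransGen_altStep_eq hg, AltEquiv]

theorem altEquiv_apply_apply [Finite α] (hf : IsMatchingPerm G f) (hg : IsMatchingPerm G g)
    (x : α) : AltEquiv G g (f x) (g x) := by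
  constructor
  · simpa only [hf.involutive _] using hf.reflTransGen_apply_apply' hg (f x)
  · simpa only [hg.involutive _] using hf.reflTransGen_apply_apply (g := g) (g x)

end IsMatchingPerm

/-- No two terms of `l` coincide or are matched to each other by `f`, so that `l` together with
the partners of its terms is a list of distinct vertices. -/
def IsPartnerFree (f : α → α) (l : List α) : Prop :=
  l.Pairwise fun x y => y ≠ x ∧ y ≠ f x

/-- `y` is reached from `x` by a walk of alternating steps that, before its last step, meets each
matching edge at most once: an alternating path of `G` when `y` is not met before either. -/
def SimplyReaches (G : SimpleGraph α) (f : Equiv.Perm α) (x y : α) : Prop :=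
  ∃ l, (x :: l ++ [y]).IsChain (AltStep G f) ∧ IsPartnerFree f (x :: l)

/-- `b` is the base of a blossom of the perfect matching `f`, the blossom being recorded as a
simple alternating walk from the partner of `b` to `b`. -/
def IsBlossomBase (G : SimpleGraph α) (f : Equiv.Perm α) (b : α) : Prop :=
  SimplyReaches G f (f b) b

theorem IsPartnerFree.nodup {l : List α} (hl : IsPartnerFree f l) : l.Nodup :=
  hl.imp fun h => h.1.symm

namespace IsMatchingPerm

theorem ne_apply_of_isPartnerFree (hf : IsMatchingPerm G f) {l : List α}
    (hl : IsPartnerFree f l) (hx : x ∈ l) (hy : y ∈ l) : y ≠ f x :=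
  List.Pairwise.forall_of_forall_of_flip (R := fun x y => y ≠ f x)
    (fun x _ => (hf.apply_ne x).symm) (hl.imp And.right)
    (hl.imp fun h e => h.2 (hf.involutive.eq_iff.1 e.symm)) hx hy

theorem simplyReaches_or_exists_isBlossomBase (hf : IsMatchingPerm G f) {a b c : α}
    (hac : ReflTransGen (AltStep G f) a c) (hcb : SimplyReaches G f c b) :
    SimplyReaches G f a b ∨ ∃ b', IsBlossomBase G f b' ∧
      ReflTransGen (AltStep G f) a (f b') ∧ ReflTransGen (AltStep G f) (f b') c := by
  induction hac using ReflTransGen.head_induction_on with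
  | refl => exact .inl hcb
  | @head a d had hdc ih =>
    obtain ⟨l, hchain, hfree⟩ | ⟨b', hb', hdb', hb'c⟩ := ih
    · have hchain' : (a :: (d :: l ++ [b])).IsChain (AltStep G f) := hchain.cons_cons had
      by_cases ha : a ∈ d :: l
      · obtain ⟨s, t, hst⟩ := List.append_of_mem ha
        rw [hst] at hchain hfree
        exact .inl ⟨t, hchain.infix ⟨s, [], by simp⟩, hfree.sublist (List.sublist_append_right s _)⟩
      by_cases hfa : f a ∈ d :: l
      · obtain ⟨s, t, hst⟩ := List.append_of_mem hfa
        rw [hst] at hchain' hfree ha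
        refine .inr ⟨f a, ?_, ?_, ?_⟩ <;> simp only [IsBlossomBase, hf.involutive a]
        · refine ⟨s, hchain'.infix ⟨[], t ++ [b], by simp⟩, List.pairwise_cons.2
            ⟨fun z hz => ⟨?_, ?_⟩, hfree.sublist (List.sublist_append_left s _)⟩⟩
          · rintro rfl
            exact ha (List.mem_append_left _ hz)
          · exact ((List.pairwise_append.1 hfree).2.2 z hz (f a) List.mem_cons_self).1.symm
        · rfl
        · exact .head had hdc
      · exact .inl ⟨d :: l, hchain', List.pairwise_cons.2
          ⟨fun z hz => ⟨ne_of_mem_of_not_mem hz ha, ne_of_mem_of_not_mem hz hfa⟩, hfree⟩⟩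
    · exact .inr ⟨b', hb', .head had hdb', hb'c⟩

theorem exists_isBlossomBase (hf : IsMatchingPerm G f) {a c : α}
    (hac : ReflTransGen (AltStep G f) a c) (hca : SimplyReaches G f c (f a)) :
    ∃ b, IsBlossomBase G f b ∧
      ReflTransGen (AltStep G f) a (f b) ∧ ReflTransGen (AltStep G f) (f b) c := by
  obtain h | h := hf.simplyReaches_or_exists_isBlossomBase hac hca
  · exact ⟨f a, by rwa [IsBlossomBase, hf.involutive a], by rw [hf.involutive a], by
      rwa [hf.involutive a]⟩
  · exact h

theorem exists_isBlossomBase_altEquiv (hf : IsMatchingPerm G f) (hx : AltEquiv G f x (f y))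
    (hxy : SimplyReaches G f x y) : ∃ b, IsBlossomBase G f b ∧ AltEquiv G f b y := by
  obtain ⟨b, hb, hyb, hbx⟩ := hf.exists_isBlossomBase hx.2 (by rwa [hf.involutive])
  have hfb : AltEquiv G f (f b) (f y) := ⟨hbx.trans hx.1, hyb⟩
  exact ⟨b, hb, by simpa only [hf.involutive _] using hf.altEquiv_contra hfb⟩

end IsMatchingPerm

section Exchange

/-- The matching `f` shifted along the alternating path through `l`: if `l = [x₁, …, xₙ]`, the
edges `xₖ – f xₖ` are exchanged for `f xₖ – xₖ₊₁` and `f xₙ – x₁`. -/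
def rematch [DecidableEq α] (f : Equiv.Perm α) (l : List α) : Equiv.Perm α :=
  l.formPerm * f * l.formPerm⁻¹

variable {i j : α}

theorem formPerm_apply_of_getLast? [DecidableEq α] {l : List α} (hx : l.head? = some x)
    (hy : l.getLast? = some y) : l.formPerm y = x := by
  obtain ⟨t, rfl⟩ := List.head?_eq_some_iff.1 hx
  obtain rfl : (x :: t).getLast (List.cons_ne_nil x t) = y := by
    simpa only [List.getLast?_eq_some_getLast (List.cons_ne_nil x t), Option.some_inj] using hy
  exact List.formPerm_apply_getLast x t

theorem exists_list_of_cycle [Finite α] (p : Equiv.Perm α) (x : α) :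
    ∃ l : List α, l.Nodup ∧ l.IsChain (fun y z => z = p y ∧ z ≠ y ∧ z ≠ x) ∧
      (∀ z ∈ l, p.SameCycle x z) ∧ l.head? = some x ∧ l.getLast? = some (p⁻¹ x) := by
  have hx : x ∈ Function.periodicPts p := p.injective.mem_periodicPts x
  obtain ⟨n, hn⟩ : ∃ n, Function.minimalPeriod p x = n + 1 :=
    Nat.exists_eq_add_one.2 (Function.minimalPeriod_pos_of_mem_periodicPts hx)
  have hinj : Set.InjOn (fun k => p^[k] x) (Set.Iio (n + 1)) :=
    hn ▸ Function.iterate_injOn_Iio_minimalPeriod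
  have hlast : p (p^[n] x) = x := by
    rw [← Function.iterate_succ_apply' p, Nat.succ_eq_add_one, ← hn,
      Function.iterate_minimalPeriod]
  have hne {k m : ℕ} (hk : k < n + 1) (hm : m < n + 1) (hkm : k ≠ m) : p^[k] x ≠ p^[m] x :=
    fun e => hkm (hinj hk hm e)
  refine ⟨(List.range (n + 1)).map fun k => p^[k] x, ?_, ?_, ?_, ?_, ?_⟩
  · exact List.nodup_range.map_on fun k hk m hm => hinj (List.mem_range.1 hk) (List.mem_range.1 hm)
  · rw [List.isChain_map, List.isChain_range]
    intro k hk
    exact ⟨Function.iterate_succ_apply' p k x, hne (by omega) (by omega) k.succ_ne_self,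
      hne (m := 0) (by omega) (by omega) k.succ_ne_zero⟩
  · simp only [List.mem_map, forall_exists_index, and_imp, forall_apply_eq_imp_iff₂]
    exact fun k _ => ⟨k, by rw [Equiv.Perm.iterate_eq_pow, zpow_natCast]⟩
  · rw [List.head?_map, List.head?_range, if_neg n.succ_ne_zero]
    rfl
  · rw [List.getLast?_map, List.getLast?_range, if_neg n.succ_ne_zero]
    exact congrArg some (Equiv.Perm.eq_inv_iff_eq.2 hlast)

theorem mapsTo_rematch [DecidableEq α] {l : List α} {U : Set α} (hU : Set.MapsTo f U U)
    (hl : ∀ z ∈ l, z ∈ U) : Set.MapsTo (rematch f l) U U := by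
  have hmaps : Set.MapsTo l.formPerm U U := fun z hz => by
    by_cases hzl : z ∈ l
    · exact hl _ (List.formPerm_apply_mem_of_mem hzl)
    · rwa [List.formPerm_apply_of_notMem hzl]
  have hmaps_inv : Set.MapsTo (l.formPerm⁻¹ : Equiv.Perm α) U U := fun z hz => by
    by_cases hzl : l.formPerm⁻¹ z ∈ l
    · exact hl _ hzl
    · have hz' : z = l.formPerm⁻¹ z := by simpa using List.formPerm_apply_of_notMem hzl
      rwa [← hz']
  exact hmaps.comp (hU.comp hmaps_inv)

namespace IsMatchingPerm

theorem not_sameCycle_mul_apply {H : SimpleGraph α} (hf : IsMatchingPerm G f)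
    (hg : IsMatchingPerm H g) (x : α) : ¬ (f * g).SameCycle x (g x) := by
  have hff : f * f = 1 := Equiv.ext hf.involutive
  have hgg : g * g = 1 := Equiv.ext hg.involutive
  have hconj : SemiconjBy g (f * g) (f * g)⁻¹ := by
    rw [SemiconjBy, mul_inv_rev, inv_eq_of_mul_eq_one_right hff, inv_eq_of_mul_eq_one_right hgg,
      mul_assoc]
  rintro ⟨n, hn⟩
  have hreflect (k : ℤ) : g (((f * g) ^ k) x) = ((f * g) ^ (n - k)) x := by
    calc g (((f * g) ^ k) x) = (((f * g)⁻¹) ^ k) (g x) :=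
          Equiv.congr_fun (hconj.zpow_right k).eq x
      _ = ((f * g) ^ (n - k)) x := by
          rw [← hn, inv_zpow', ← Equiv.Perm.mul_apply, ← zpow_add, neg_add_eq_sub]
  obtain ⟨k, rfl | rfl⟩ := n.even_or_odd'
  · apply hg.apply_ne (((f * g) ^ k) x)
    rw [hreflect, two_mul, add_sub_cancel_right]
  · apply hf.apply_ne (g (((f * g) ^ k) x))
    calc f (g (((f * g) ^ k) x)) = ((f * g) ^ (1 + k)) x := by rw [zpow_one_add]; rfl
      _ = g (((f * g) ^ k) x) := by rw [hreflect]; congr 2; ring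

theorem conj {H : SimpleGraph α} (hf : IsMatchingPerm G f) {c : Equiv.Perm α}
    (hc : ∀ x, H.Adj (c x) (c (f x))) : IsMatchingPerm H (c * f * c⁻¹) where
  involutive x := by simp [hf.involutive _]
  adj x := by simpa using hc (c⁻¹ x)

section Rematch

variable [DecidableEq α] {l : List α}

theorem adj_formPerm (hchain : l.IsChain (AltStep G f)) (hnodup : l.Nodup)
    (hi : l.head? = some i) (hj : l.getLast? = some (f j)) (hf : IsMatchingPerm G f) (hij : i ≠ j)
    (hx : x ∈ l) : (G ⊔ edge i j).Adj (f x) (l.formPerm x) := by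
  obtain ⟨k, hk, rfl⟩ := List.getElem_of_mem hx
  obtain hk' | hk' : k + 1 < l.length ∨ k = l.length - 1 := by omega
  · rw [l.formPerm_apply_lt_getElem hnodup k hk']
    exact .inl (hchain.getElem k hk').1
  · have hlast : l[k] = f j := by
      rwa [List.getLast?_eq_getElem?, ← hk', List.getElem?_eq_getElem hk, Option.some_inj] at hj
    rw [hlast, hf.involutive j, formPerm_apply_of_getLast? hi hj]
    exact .inr ((edge_adj ..).2 ⟨.inr ⟨rfl, rfl⟩, hij.symm⟩)

theorem isMatchingPerm_rematch (hf : IsMatchingPerm G f)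
    (hchain : l.IsChain (AltStep G f)) (hfree : IsPartnerFree f l)
    (hi : l.head? = some i) (hj : l.getLast? = some (f j)) :
    IsMatchingPerm (G ⊔ edge i j) (rematch f l) := by
  have hij : i ≠ j := by
    have := hf.ne_apply_of_isPartnerFree hfree (List.mem_of_getLast? hj) (List.mem_of_head? hi)
    rwa [hf.involutive j] at this
  have hfix {x : α} (hx : x ∈ l) : l.formPerm (f x) = f x :=
    List.formPerm_apply_of_notMem fun h => hf.ne_apply_of_isPartnerFree hfree hx h rfl
  have hadj {x : α} (hx : x ∈ l) := hf.adj_formPerm hchain hfree.nodup hi hj hij hx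
  refine hf.conj fun x => ?_
  by_cases hx : x ∈ l
  · rw [hfix hx]
    exact (hadj hx).symm
  by_cases hfx : f x ∈ l
  · rw [List.formPerm_apply_of_notMem hx]
    simpa only [hf.involutive x] using hadj hfx
  · rw [List.formPerm_apply_of_notMem hx, List.formPerm_apply_of_notMem hfx]
    exact .inl (hf.adj x)

theorem rematch_apply (hf : IsMatchingPerm G f) (hfree : IsPartnerFree f l)
    (hi : l.head? = some i) (hj : l.getLast? = some (f j)) : rematch f l i = j := by
  have hinv : l.formPerm⁻¹ i = f j :=
    Equiv.Perm.inv_eq_iff_eq.2 (formPerm_apply_of_getLast? hi hj).symm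
  have hjl : j ∉ l := fun h =>
    hf.ne_apply_of_isPartnerFree hfree h (List.mem_of_getLast? hj) rfl
  rw [rematch, Equiv.Perm.mul_apply, Equiv.Perm.mul_apply, hinv, hf.involutive j,
    List.formPerm_apply_of_notMem hjl]

end Rematch

-- The list is the cycle of `i` under `h * g`: the path from `i` to `j` in the union of `g` and `h`.
theorem exists_isChain_of_edge [Finite α] {h : Equiv.Perm α} {U : Set α}
    (hg : IsMatchingPerm G g) (hh : IsMatchingPerm (G ⊔ edge i j) h) (hij : h i = j)
    (hgU : Set.MapsTo g U U) (hhU : Set.MapsTo h U U) (hi : i ∈ U) :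
    ∃ l : List α, l.IsChain (AltStep G g) ∧ IsPartnerFree g l ∧ (∀ z ∈ l, z ∈ U) ∧
      l.head? = some i ∧ l.getLast? = some (g j) := by
  obtain ⟨l, hnodup, hchain, hcycle, hhead, hlast⟩ := exists_list_of_cycle (h * g) i
  have hne {x y : α} (hx : x ∈ l) (hy : y ∈ l) : y ≠ g x := fun e =>
    hh.not_sameCycle_mul_apply hg x (e ▸ (hcycle x hx).symm.trans (hcycle y hy))
  have hprev : (h * g)⁻¹ i = g j :=
    Equiv.Perm.inv_eq_iff_eq.2 (by simp [← hij, hg.involutive _, hh.involutive _])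
  refine ⟨l, ?_, ?_, ?_, hhead, hprev ▸ hlast⟩
  · refine hchain.imp_of_mem_imp fun x y hx _ ⟨hy, hyx, hyi⟩ => ⟨?_, hyx⟩
    rw [hy]
    refine (hh.adj (g x)).resolve_right fun hedge => ?_
    obtain ⟨hgx, -⟩ | ⟨-, hgx⟩ := ((edge_adj ..).1 hedge).1
    · exact hne (List.mem_of_head? hhead) hx (by rw [← hgx, hg.involutive])
    · exact hyi (hy.trans hgx)
  · exact hnodup.imp_of_mem fun hx hy hxy => ⟨hxy.symm, hne hx hy⟩
  · intro z hz
    obtain ⟨k, rfl⟩ := (hcycle z hz).exists_nat_pow_eq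
    rw [← Equiv.Perm.iterate_eq_pow]
    exact (hhU.comp hgU).iterate k hi

theorem exists_isChain_exchange [Finite α] (hf : IsMatchingPerm G f) (hg : IsMatchingPerm G g)
    {U : Set α} (hfU : Set.MapsTo f U U) (hgU : Set.MapsTo g U U) {l : List α}
    (hchain : l.IsChain (AltStep G f)) (hfree : IsPartnerFree f l) (hl : ∀ z ∈ l, z ∈ U)
    (hi : l.head? = some i) (hj : l.getLast? = some (f j)) :
    ∃ l' : List α, l'.IsChain (AltStep G g) ∧ IsPartnerFree g l' ∧ (∀ z ∈ l', z ∈ U) ∧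
      l'.head? = some i ∧ l'.getLast? = some (g j) := by
  classical
  exact hg.exists_isChain_of_edge (hf.isMatchingPerm_rematch hchain hfree hi hj)
    (hf.rematch_apply hfree hi hj) hgU (mapsTo_rematch hfU hl) (hl i (List.mem_of_head? hi))

theorem simplyReaches_exchange [Finite α] (hf : IsMatchingPerm G f) (hg : IsMatchingPerm G g)
    {U : Set α} (hfU : Set.MapsTo f U U) (hgU : Set.MapsTo g U U) {l : List α}
    (hchain : (x :: l ++ [y]).IsChain (AltStep G f)) (hfree : IsPartnerFree f l)
    (hl : ∀ z ∈ l, z ∈ U) (hx : g (f x) ∉ U) (hy : y ∉ U) (hxy : y ≠ g (f x)) :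
    SimplyReaches G g (g (f x)) y := by
  rw [List.isChain_append] at hchain
  obtain ⟨hchain_l, -, hlast_y⟩ := hchain
  rw [List.isChain_cons] at hchain_l
  have step {w z : α} (hz : G.Adj (f w) z) (hne : z ≠ g (f w)) : AltStep G g (g (f w)) z :=
    ⟨by rwa [hg.involutive], hne⟩
  obtain rfl | hne := eq_or_ne l []
  · exact ⟨[], by simpa using step (hlast_y x rfl y rfl).1 hxy, List.pairwise_singleton _ _⟩
  have hhead := List.head?_eq_some_head hne
  have hlast := List.getLast?_eq_some_getLast hne
  set i := l.head hne
  set k := l.getLast hne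
  have hi : i ∈ U := hl i (List.mem_of_head? hhead)
  have hk : k ∈ U := hl k (List.mem_of_getLast? hlast)
  have hky : G.Adj (f k) y := (hlast_y k (by simp [List.getLast?_cons, hlast]) y rfl).1
  obtain ⟨l', hchain', hfree', hl', hhead', hlast'⟩ := hf.exists_isChain_exchange hg hfU hgU
    hchain_l.2 hfree hl (j := f k) hhead (by rw [hlast, hf.involutive])
  refine ⟨l', ?_, List.pairwise_cons.2 ⟨fun z hz => ⟨?_, ?_⟩, hfree'⟩⟩
  · have hxi : AltStep G g (g (f x)) i :=
      step (hchain_l.1 i hhead).1 (ne_of_mem_of_not_mem hi hx)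
    have hky' : AltStep G g (g (f k)) y :=
      step hky (ne_of_mem_of_not_mem (hgU (hfU hk)) hy).symm
    simpa [List.isChain_append, List.isChain_cons, List.getLast?_cons, hhead', hlast', hchain']
      using ⟨hxi, hky'⟩
  · exact ne_of_mem_of_not_mem (hl' z hz) hx
  · exact ne_of_mem_of_not_mem (hl' z hz) fun h => hx (by simpa only [hg.involutive _] using hgU h)

end IsMatchingPerm

end Exchange

/-- `v` lies between blossom bases in the alternating step digraph of `f`. These are the vertices
of the Jposies of `f`. The step out of the partner of the first base may not be empty: that
partner need not lie on the joining walk. -/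
def IsJposyVertex (G : SimpleGraph α) (f : Equiv.Perm α) (v : α) : Prop :=
  (∃ b, IsBlossomBase G f b ∧ ReflTransGen (AltStep G f) v b) ∧
    ∃ b, IsBlossomBase G f b ∧ TransGen (AltStep G f) (f b) v

theorem exists_infix_forall_not {P Q : α → Prop} (l : List α) {a b : α} (ha : P a) (hb : Q b) :
    ∃ x t y, x :: t ++ [y] <:+: a :: l ++ [b] ∧ t <:+: l ∧ P x ∧ Q y ∧ ∀ z ∈ t, ¬ P z ∧ ¬ Q z := by
  induction hn : l.length using Nat.strong_induction_on generalizing l a b with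
  | _ n ih =>
    subst hn
    by_cases h : ∀ z ∈ l, ¬ P z ∧ ¬ Q z
    · exact ⟨a, l, b, List.infix_rfl, List.infix_rfl, ha, hb, h⟩
    push Not at h
    obtain ⟨c, hc, hPQ⟩ := h
    obtain ⟨s, t, rfl⟩ := List.append_of_mem hc
    by_cases hP : P c
    · obtain ⟨x, u, y, hu, hut, h⟩ := ih _ (by simp; omega) t hP hb rfl
      exact ⟨x, u, y, hu.trans ⟨a :: s, [], by simp⟩, hut.trans ⟨s ++ [c], [], by simp⟩, h⟩
    · obtain ⟨x, u, y, hu, hus, h⟩ := ih _ (by simp) s ha (hPQ hP) rfl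
      exact ⟨x, u, y, hu.trans ⟨[], t ++ [b], by simp⟩, hus.trans ⟨[], c :: t, by simp⟩, h⟩

namespace IsMatchingPerm

theorem altEquiv_apply_iff (hf : IsMatchingPerm G f) :
    AltEquiv G f (f x) (f y) ↔ AltEquiv G f x y :=
  ⟨fun h => by simpa only [hf.involutive _] using hf.altEquiv_contra h, hf.altEquiv_contra⟩

theorem exists_isBlossomBase_of_altEquiv_apply (hf : IsMatchingPerm G f) {b : α}
    (h : AltEquiv G f b (f b)) : ∃ b', IsBlossomBase G f b' ∧ AltEquiv G f b' b := by
  obtain hb | ⟨c, hc, hcb⟩ := h.2.cases_tail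
  · exact absurd hb.symm (hf.apply_ne b)
  · exact hf.exists_isBlossomBase_altEquiv ⟨.head hcb h.1, hc⟩
      ⟨[], by simpa using hcb, List.pairwise_singleton _ _⟩

theorem exists_isBlossomBase_of_isBlossomBase [Finite α] (hf : IsMatchingPerm G f)
    (hg : IsMatchingPerm G g) {b : α} (hb : IsBlossomBase G f b) :
    ∃ b', IsBlossomBase G g b' ∧ AltEquiv G g b' b := by
  have hfg (z : α) : AltEquiv G g (f z) (g z) := hf.altEquiv_apply_apply hg z
  have hf_iff {z w : α} : AltEquiv G g (f z) (f w) ↔ AltEquiv G g z w := by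
    simpa only [hf.altEquiv_eq hg] using hf.altEquiv_apply_iff (x := z) (y := w)
  by_cases hbb : AltEquiv G g b (f b)
  · exact hg.exists_isBlossomBase_of_altEquiv_apply (hbb.trans (hfg b))
  obtain ⟨l, hchain, hfree⟩ := hb
  obtain ⟨x, t, y, hinfix, ht, hx, hy, hU⟩ := exists_infix_forall_not
    (P := (AltEquiv G g · (f b))) (Q := (AltEquiv G g · b)) l .rfl .rfl
  have hgx : AltEquiv G g (g (f x)) (f b) := by
    have h := (hfg (f x)).symm
    rw [hf.involutive x] at h
    exact h.trans hx
  have hreach : SimplyReaches G g (g (f x)) y := by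
    let U : Set α := {z | ¬ AltEquiv G g z (f b) ∧ ¬ AltEquiv G g z b}
    have hfU : Set.MapsTo f U U := fun z hz =>
      ⟨fun h => hz.2 (hf_iff.1 h), fun h => hz.1 (hf_iff.1 (by rwa [hf.involutive b]))⟩
    have hgU : Set.MapsTo g U U := fun z hz =>
      ⟨fun h => (hfU hz).1 ((hfg z).trans h), fun h => (hfU hz).2 ((hfg z).trans h)⟩
    exact hf.simplyReaches_exchange hg hfU hgU (hchain.infix hinfix)
      ((List.pairwise_cons.1 hfree).2.sublist ht.sublist) hU (fun h => h.1 hgx) (fun h => h.2 hy)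
      fun h => hbb (hy.symm.trans (h ▸ hgx))
  have hgy : AltEquiv G g (g (f x)) (g y) :=
    hgx.trans ((hf_iff.2 hy.symm).trans (hfg y))
  obtain ⟨b', hb', hb'y⟩ := hg.exists_isBlossomBase_altEquiv hgy hreach
  exact ⟨b', hb', hb'y.trans hy⟩

end IsMatchingPerm

theorem IsJposyVertex.of_isMatchingPerm [Finite α] (hf : IsMatchingPerm G f)
    (hg : IsMatchingPerm G g) {v : α} (hv : IsJposyVertex G f v) : IsJposyVertex G g v := by
  rw [IsJposyVertex, hf.transGen_altStep_eq hg, hf.reflTransGen_altStep_eq hg] at hv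
  obtain ⟨⟨b₂, hb₂, hvb₂⟩, b₁, hb₁, hb₁v⟩ := hv
  obtain ⟨c₁, hc₁, hcb₁⟩ := hf.exists_isBlossomBase_of_isBlossomBase hg hb₁
  obtain ⟨c₂, hc₂, hcb₂⟩ := hf.exists_isBlossomBase_of_isBlossomBase hg hb₂
  have hgc₁ : AltEquiv G g (g c₁) (f b₁) :=
    (hg.altEquiv_contra hcb₁).trans (hf.altEquiv_apply_apply hg b₁).symm
  exact ⟨⟨c₂, hc₂, hvb₂.trans hcb₂.2⟩, c₁, hc₁, hb₁v.trans_right hgc₁.1⟩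

end Reachability

section Chains

variable {β : Type*} {R : β → β → Prop} {l : List β} {a b x : β}

theorem transGen_and_reflTransGen_of_isChain (hl : (a :: l ++ [b]).IsChain R)
    (hx : x ∈ l ++ [b]) : TransGen R a x ∧ ReflTransGen R x b := by
  obtain ⟨ha, hlb⟩ := List.pairwise_cons.1 (hl.imp fun _ _ => TransGen.single).pairwise
  refine ⟨ha x hx, ?_⟩
  obtain hxl | hxb := List.mem_append.1 hx
  · exact ((List.pairwise_append.1 hlb).2.2 x hxl b (by simp)).to_reflTransGen
  · rw [List.mem_singleton.1 hxb]

theorem reflTransGen_and_transGen_of_isChain (hl : (a :: l ++ [b]).IsChain R)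
    (hx : x ∈ a :: l) : ReflTransGen R a x ∧ TransGen R x b := by
  obtain ⟨hal, -, hb⟩ := List.pairwise_append.1 (hl.imp fun _ _ => TransGen.single).pairwise
  refine ⟨?_, hb x hx b (by simp)⟩
  obtain rfl | hxl := List.mem_cons.1 hx
  · rfl
  · exact ((List.pairwise_cons.1 hal).1 x hxl).to_reflTransGen

theorem exists_isChain_of_transGen_of_reflTransGen (hax : TransGen R a x)
    (hxb : ReflTransGen R x b) : ∃ l, (a :: l ++ [b]).IsChain R ∧ x ∈ l ++ [b] := by
  have hextend {l : List β} {c d : β} (hl : (a :: l ++ [c]).IsChain R) (hcd : R c d) :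
      (a :: (l ++ [c]) ++ [d]).IsChain R :=
    hl.append (.singleton d) (by simpa [List.getLast?_cons] using hcd)
  induction hxb with
  | refl =>
    induction hax with
    | single h => exact ⟨[], by simpa using h, by simp⟩
    | tail _ h ih =>
      obtain ⟨l, hl, -⟩ := ih
      exact ⟨_, hextend hl h, by simp⟩
  | tail _ h ih =>
    obtain ⟨l, hl, hx⟩ := ih
    exact ⟨_, hextend hl h, List.mem_append_left _ hx⟩

end Chains

section Walks

variable {α : Type*} {G : SimpleGraph α} {M : Finset (Sym2 α)} {f : Equiv.Perm α} {a b u v : α}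

theorem isAltWalk_iff_isChain {w : G.Walk a b} :
    IsAltWalk M w ↔ w.edges.IsChain fun e e' => (e ∈ M ↔ e' ∉ M) :=
  Iff.rfl

theorem isNNAltWalk_cons_nil (h : G.Adj a b) :
    IsNNAltWalk M (.cons h .nil) ↔ s(a, b) ∉ M := by
  simp [IsNNAltWalk, isAltWalk_iff_isChain]

theorem isNNAltWalk_cons_cons {x y : α} (h : G.Adj a x) (h' : G.Adj x y) (w : G.Walk y b) :
    IsNNAltWalk M (.cons h (.cons h' w)) ↔ s(a, x) ∉ M ∧ s(x, y) ∈ M ∧ IsNNAltWalk M w := by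
  cases w <;> simp [IsNNAltWalk, isAltWalk_iff_isChain] <;> tauto

section Count

variable {β : Type*} {p : β → Prop} [DecidablePred p] {l : List β} {x y : β}

theorem two_mul_countP_of_isChain (h : l.IsChain fun x y => (p x ↔ ¬ p y))
    (hx : l.head? = some x) (hy : l.getLast? = some y) :
    2 * l.countP (p ·) + (if p x then 0 else 1) + (if p y then 0 else 1) = l.length + 1 := by
  induction l generalizing x with
  | nil => simp at hx
  | cons a l ih =>
    obtain rfl : a = x := by simpa using hx
    obtain _ | ⟨c, l⟩ := l
    · obtain rfl : a = y := by simpa using hy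
      by_cases ha : p a <;> simp [ha]
    · rw [List.isChain_cons_cons] at h
      have := ih h.2 rfl (by simpa using hy)
      grind

theorem isChain_or_two_mul_countP_lt (h : l.IsChain fun x y => ¬ (p x ∧ p y))
    (hx : l.head? = some x) (hy : l.getLast? = some y) :
    l.IsChain (fun x y => (p x ↔ ¬ p y)) ∨
      2 * l.countP (p ·) + (if p x then 0 else 1) + (if p y then 0 else 1) < l.length + 1 := by
  induction l generalizing x with
  | nil => simp at hx
  | cons a l ih =>
    obtain rfl : a = x := by simpa using hx
    obtain _ | ⟨c, l⟩ := l
    · exact .inl (.singleton a)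
    · have hy' : (c :: l).getLast? = some y := by simpa using hy
      rw [List.isChain_cons_cons] at h ⊢
      obtain hl | hl := ih h.2 rfl hy'
      · have := two_mul_countP_of_isChain hl rfl hy'
        grind
      · grind

end Count

theorem isChain_not_mem_and_mem_of_isTrail (hM : IsMatching' G M)
    {w : G.Walk a b} (hw : w.IsTrail) : w.edges.IsChain fun e e' => ¬ (e ∈ M ∧ e' ∈ M) := by
  induction w with
  | nil => exact .nil
  | @cons a x b hax w ih =>
    have hw' := (Walk.isTrail_cons _ _).1 hw
    cases w with
    | nil => exact .singleton _
    | @cons _ y _ hxy w =>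
      refine List.isChain_cons_cons.2 ⟨fun h => ?_, ih hw'.1⟩
      refine hM.2 _ h.1 _ h.2 (fun e => hw'.2 ?_) x (Sym2.mem_mk_right a x) (Sym2.mem_mk_left x y)
      exact List.mem_cons.2 (.inl e)

theorem mem_of_head?_edges {w : G.Walk a b} {e : Sym2 α} (he : w.edges.head? = some e) :
    a ∈ e := by
  cases w with
  | nil => simp at he
  | cons => simp [← show _ = e by simpa using he]

theorem mem_of_getLast?_edges {w : G.Walk a b} {e : Sym2 α} (he : w.edges.getLast? = some e) :
    b ∈ e :=
  mem_of_head?_edges (w := w.reverse) (by simpa using he)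

theorem exists_edges_head?_getLast? {w : G.Walk a b} (hw : Odd w.length) :
    ∃ e e', w.edges.head? = some e ∧ w.edges.getLast? = some e' := by
  have hne : w.edges ≠ [] := by
    rw [← List.length_pos_iff, Walk.length_edges]
    exact hw.pos
  exact ⟨_, _, List.head?_eq_some_head hne, List.getLast?_eq_some_getLast hne⟩

theorem isNNAltWalk_or_isMMAltWalk_of_odd {w : G.Walk a b} (hw : IsAltWalk M w)
    (hodd : Odd w.length) : IsNNAltWalk M w ∨ IsMMAltWalk M w := by
  classical
  obtain ⟨e, e', he, he'⟩ := exists_edges_head?_getLast? hodd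
  have hcount := two_mul_countP_of_isChain hw he he'
  rw [Walk.length_edges] at hcount
  obtain ⟨k, hk⟩ := hodd
  have hiff : e ∈ M ↔ e' ∈ M := by grind
  by_cases heM : e ∈ M
  · exact .inr ⟨hw, ⟨e, he, heM⟩, e', he', hiff.1 heM⟩
  · exact .inl ⟨hw, ⟨e, he, heM⟩, e', he', mt hiff.2 heM⟩

theorem IsNNAltWalk.two_mul_countP_add_one [DecidableEq α] {w : G.Walk a b}
    (hw : IsNNAltWalk M w) : 2 * w.edges.countP (fun e => decide (e ∈ M)) + 1 = w.length := by
  obtain ⟨halt, ⟨e, he, heM⟩, e', he', heM'⟩ := hw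
  have hcount := two_mul_countP_of_isChain halt he he'
  rw [if_neg heM, if_neg heM', Walk.length_edges] at hcount
  omega

theorem IsNNAltWalk.odd_length {w : G.Walk a b} (hw : IsNNAltWalk M w) : Odd w.length := by
  classical exact ⟨_, hw.two_mul_countP_add_one.symm⟩

theorem IsNNAltWalk.append_append {x y : α} {p : G.Walk a x} {w : G.Walk x y} {q : G.Walk y b}
    (hp : IsNNAltWalk M p) (hw : IsMMAltWalk M w) (hq : IsNNAltWalk M q) :
    IsNNAltWalk M (p.append (w.append q)) := by
  obtain ⟨hp, ⟨e₁, he₁, he₁M⟩, e₁', he₁', heM₁'⟩ := hp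
  obtain ⟨hw, ⟨e, he, heM⟩, e', he', heM'⟩ := hw
  obtain ⟨hq, ⟨e₂, he₂, he₂M⟩, e₂', he₂', heM₂'⟩ := hq
  rw [isAltWalk_iff_isChain] at hp hw hq
  simp_all [IsNNAltWalk, isAltWalk_iff_isChain, List.isChain_append]

-- With no two consecutive matching edges and non-matching edges at both ends, only alternating
-- walks reach the number of matching edges of a blossom.
theorem IsBlossom.isNNAltWalk [DecidableEq α] (hM : IsMatching' G M) {c : G.Walk b b}
    (hc : IsBlossom G M c) : IsNNAltWalk M c := by
  obtain ⟨hcycle, hodd, hcount, hbase⟩ := hc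
  obtain ⟨e, e', he, he'⟩ := exists_edges_head?_getLast? hodd
  have heM : e ∉ M := fun h => hbase e (List.mem_of_head? he) h (mem_of_head?_edges he)
  have heM' : e' ∉ M := fun h => hbase e' (List.mem_of_getLast? he') h (mem_of_getLast?_edges he')
  refine ⟨?_, ⟨e, he, heM⟩, e', he', heM'⟩
  obtain h | h := isChain_or_two_mul_countP_lt
    (isChain_not_mem_and_mem_of_isTrail hM hcycle.isTrail) he he'
  · exact h
  · rw [if_neg heM, if_neg heM', Walk.length_edges] at h
    omega

theorem InJposy.exists_isNNAltWalk [DecidableEq α] (hM : IsMatching' G M) (hv : InJposy G M v) :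
    ∃ (b₁ b₂ : α) (c₁ : G.Walk b₁ b₁) (c₂ : G.Walk b₂ b₂) (w : G.Walk b₁ b₂),
      IsBlossom G M c₁ ∧ IsBlossom G M c₂ ∧ IsNNAltWalk M w ∧ v ∈ w.support := by
  obtain ⟨⟨b₁, b₂, c₁, c₂, w, hc₁, hc₂, hodd, halt⟩, hv⟩ := hv
  obtain hv | hv | hv := hv
  · exact ⟨b₁, b₁, c₁, c₁, c₁, hc₁, hc₁, hc₁.isNNAltWalk hM, hv⟩
  · exact ⟨b₂, b₂, c₂, c₂, c₂, hc₂, hc₂, hc₂.isNNAltWalk hM, hv⟩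
  · obtain hw | hw := isNNAltWalk_or_isMMAltWalk_of_odd halt hodd
    · exact ⟨b₁, b₂, c₁, c₂, w, hc₁, hc₂, hw, hv⟩
    · exact ⟨b₁, b₂, c₁, c₂, c₁.append (w.append c₂), hc₁, hc₂,
        (hc₁.isNNAltWalk hM).append_append hw (hc₂.isNNAltWalk hM), by
          simp only [Walk.mem_support_append_iff, hv, true_or, or_true]⟩

/-- `f` is the partner function of `M`: the edges of `M` are the pairs `{x, f x}`. -/
def IsPartner (M : Finset (Sym2 α)) (f : α → α) : Prop :=
  ∀ x y, s(x, y) ∈ M ↔ f x = y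

/-- Each term of `l` followed by its partner: the alternating walk recorded by `l`. -/
def withPartners (f : α → α) (l : List α) : List α :=
  l.flatMap fun z => [z, f z]

@[simp]
theorem withPartners_nil {f : α → α} : withPartners f [] = [] :=
  rfl

@[simp]
theorem withPartners_cons {f : α → α} {l : List α} :
    withPartners f (u :: l) = u :: f u :: withPartners f l :=
  rfl

namespace IsMatchingPerm

theorem mem_withPartners (hf : IsMatchingPerm G f) {l : List α} :
    u ∈ withPartners f l ↔ u ∈ l ∨ f u ∈ l := by
  have h (z : α) : u = f z ↔ f u = z := by rw [hf.involutive.eq_iff, eq_comm]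
  simp [withPartners, h, and_or_left, exists_or]

theorem nodup_withPartners_iff (hf : IsMatchingPerm G f) {l : List α} :
    (withPartners f l).Nodup ↔ IsPartnerFree f l := by
  induction l with
  | nil => simp [IsPartnerFree]
  | cons z l ih =>
    have hz : z ≠ f z := (hf.apply_ne z).symm
    have h : (∀ a ∈ l, a ≠ z ∧ a ≠ f z) ↔ z ∉ l ∧ f z ∉ l := by grind
    rw [IsPartnerFree, List.pairwise_cons, h, ← IsPartnerFree, ← ih]
    simp only [withPartners_cons, List.nodup_cons, List.mem_cons, hz, hf.mem_withPartners, not_or,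
      hf.involutive z]
    tauto

theorem exists_isChain_of_isNNAltWalk (hf : IsMatchingPerm G f) (hfM : IsPartner M f) :
    ∀ {a b : α} {w : G.Walk a b}, IsNNAltWalk M w →
      ∃ l, (f a :: l ++ [b]).IsChain (AltStep G f) ∧ w.support = a :: withPartners f l ++ [b]
  | _, _, .nil, hw => by simp [IsNNAltWalk] at hw
  | a, b, .cons h .nil, hw => by
    rw [isNNAltWalk_cons_nil, hfM] at hw
    exact ⟨[], by simpa [AltStep, hf.involutive a, h] using Ne.symm hw, by simp⟩
  | a, b, .cons (v := x) h (.cons (v := y) h' w), hw => by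
    rw [isNNAltWalk_cons_cons, hfM, hfM] at hw
    obtain ⟨hax, hxy, hw⟩ := hw
    obtain ⟨l, hchain, hsupport⟩ := hf.exists_isChain_of_isNNAltWalk hfM hw
    subst hxy
    rw [hf.involutive] at hchain
    refine ⟨x :: l, List.isChain_cons_cons.2 ⟨⟨?_, Ne.symm hax⟩, hchain⟩, ?_⟩
    · rwa [hf.involutive]
    · simp [hsupport]

theorem exists_isNNAltWalk_of_isChain (hf : IsMatchingPerm G f) (hfM : IsPartner M f) {l : List α}
    (hl : (f a :: l ++ [b]).IsChain (AltStep G f)) :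
    ∃ w : G.Walk a b, IsNNAltWalk M w ∧ w.support = a :: withPartners f l ++ [b] := by
  induction l generalizing a with
  | nil =>
    obtain ⟨h, hne⟩ : AltStep G f (f a) b := by simpa using hl
    rw [hf.involutive] at h
    exact ⟨.cons h .nil, (isNNAltWalk_cons_nil h).2 fun hM => hne ((hfM a b).1 hM).symm, by simp⟩
  | cons x l ih =>
    obtain ⟨⟨h, hne⟩, hl⟩ := List.isChain_cons_cons.1 hl
    rw [hf.involutive] at h
    obtain ⟨w, hw, hsupport⟩ := ih (a := f x) (by rwa [hf.involutive])
    refine ⟨.cons h (.cons (hf.adj x) w), ?_, by simp [hsupport]⟩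
    exact (isNNAltWalk_cons_cons _ _ _).2
      ⟨fun hM => hne ((hfM a x).1 hM).symm, (hfM _ _).2 rfl, hw⟩

theorem isBlossomBase_of_isBlossom [DecidableEq α] (hf : IsMatchingPerm G f) (hM : IsMatching' G M)
    (hfM : IsPartner M f) {c : G.Walk b b} (hc : IsBlossom G M c) : IsBlossomBase G f b := by
  obtain ⟨l, hchain, hsupport⟩ := hf.exists_isChain_of_isNNAltWalk hfM (hc.isNNAltWalk hM)
  refine ⟨l, hchain, hf.nodup_withPartners_iff.1 ?_⟩
  have hnodup : (withPartners f l ++ [b]).Nodup := by simpa [hsupport] using hc.1.support_nodup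
  have hb : b ∉ withPartners f l := fun h => List.disjoint_of_nodup_append hnodup h (by simp)
  have hfb : f b ∉ withPartners f l := by
    simpa [hf.mem_withPartners, hf.involutive b, or_comm] using hb
  simpa [hf.involutive b, hf.apply_ne b, hb, hfb] using hnodup.of_append_left

theorem exists_isBlossom_of_isBlossomBase [DecidableEq α] (hf : IsMatchingPerm G f)
    (hfM : IsPartner M f) (hb : IsBlossomBase G f b) : ∃ c : G.Walk b b, IsBlossom G M c := by
  obtain ⟨l, hchain, hfree⟩ := hb
  obtain ⟨c, hc, hsupport⟩ := hf.exists_isNNAltWalk_of_isChain hfM hchain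
  have hnodup := hf.nodup_withPartners_iff.2 hfree
  rw [withPartners_cons, hf.involutive b] at hnodup
  have hfb : f b ∉ c.support := by
    rw [hsupport]
    grind
  have hlength : 3 ≤ c.length := by
    have hodd := hc.odd_length
    have hne : c.length ≠ 1 := fun h => G.irrefl (Walk.adj_of_length_eq_one h)
    grind
  refine ⟨c, Walk.isCycle_iff_isPath_tail_and_le_length.2 ⟨?_, hlength⟩, hc.odd_length,
    hc.two_mul_countP_add_one, fun e he heM hbe => ?_⟩
  · have hnil : ¬ c.Nil := by rw [← Walk.length_eq_zero_iff]; omega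
    rw [Walk.isPath_def, Walk.support_tail_of_not_nil _ hnil, hsupport]
    grind
  · obtain ⟨y, rfl⟩ := Sym2.mem_iff_exists.1 hbe
    obtain rfl := (hfM b y).1 heM
    exact hfb (c.snd_mem_support_of_mem_edges he)

theorem isJposyVertex_of_isChain (hf : IsMatchingPerm G f) {b₁ b₂ : α} {l : List α}
    (hb₁ : IsBlossomBase G f b₁) (hb₂ : IsBlossomBase G f b₂)
    (hl : (f b₁ :: l ++ [b₂]).IsChain (AltStep G f))
    (hv : v ∈ b₁ :: withPartners f l ++ [b₂]) : IsJposyVertex G f v := by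
  have hv' : v ∈ l ++ [b₂] ∨ f v ∈ f b₁ :: l := by
    simp only [List.cons_append, List.mem_cons, List.mem_append, hf.mem_withPartners] at hv ⊢
    rw [f.injective.eq_iff]
    tauto
  obtain hv | hv := hv'
  · obtain ⟨hb₁v, hvb₂⟩ := transGen_and_reflTransGen_of_isChain hl hv
    exact ⟨⟨b₂, hb₂, hvb₂⟩, b₁, hb₁, hb₁v⟩
  · obtain ⟨hb₁v, hvb₂⟩ := reflTransGen_and_transGen_of_isChain hl hv
    refine ⟨⟨b₁, hb₁, ?_⟩, b₂, hb₂, ?_⟩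
    · simpa only [hf.involutive _] using hf.reflTransGen_contra hb₁v
    · simpa only [hf.involutive _] using hf.transGen_contra hvb₂

theorem isJposyVertex_iff_inJposy [DecidableEq α] (hf : IsMatchingPerm G f) (hM : IsMatching' G M)
    (hfM : IsPartner M f) : IsJposyVertex G f v ↔ InJposy G M v := by
  constructor
  · rintro ⟨⟨b₂, hb₂, hvb₂⟩, b₁, hb₁, hb₁v⟩
    obtain ⟨c₁, hc₁⟩ := hf.exists_isBlossom_of_isBlossomBase hfM hb₁
    obtain ⟨c₂, hc₂⟩ := hf.exists_isBlossom_of_isBlossomBase hfM hb₂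
    obtain ⟨l, hl, hv⟩ := exists_isChain_of_transGen_of_reflTransGen hb₁v hvb₂
    obtain ⟨w, hw, hsupport⟩ := hf.exists_isNNAltWalk_of_isChain hfM hl
    refine ⟨⟨b₁, b₂, c₁, c₂, w, hc₁, hc₂, hw.odd_length, hw.1⟩, .inr (.inr ?_)⟩
    simp only [hsupport, List.cons_append, List.mem_cons, List.mem_append, hf.mem_withPartners]
      at hv ⊢
    tauto
  · intro hv
    obtain ⟨b₁, b₂, c₁, c₂, w, hc₁, hc₂, hw, hv⟩ := hv.exists_isNNAltWalk hM
    obtain ⟨l, hl, hsupport⟩ := hf.exists_isChain_of_isNNAltWalk hfM hw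
    exact hf.isJposyVertex_of_isChain (hf.isBlossomBase_of_isBlossom hM hfM hc₁)
      (hf.isBlossomBase_of_isBlossom hM hfM hc₂) hl (hsupport ▸ hv)

end IsMatchingPerm

end Walks

section PerfectMatching

variable {α : Type*} {G : SimpleGraph α} {M N : Finset (Sym2 α)}

theorem card_biUnion_toFinset [DecidableEq α] (hM : IsMatching' G M) :
    (M.biUnion Sym2.toFinset).card = 2 * M.card := by
  rw [Finset.card_biUnion fun e he e' he' hne => ?_, Finset.sum_const_nat fun e he => ?_, mul_comm]
  · exact Sym2.card_toFinset_of_not_isDiag e (G.not_isDiag_of_mem_edgeSet (hM.1 e he))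
  · simpa only [Finset.disjoint_left, Sym2.mem_toFinset] using hM.2 e he e' he' hne

theorem biUnion_toFinset_eq_univ_iff [Fintype α] [DecidableEq α] :
    M.biUnion Sym2.toFinset = Finset.univ ↔ ∀ v, ∃ e ∈ M, v ∈ e := by
  simp [Finset.ext_iff]

theorem IsPerfectMatching'.of_isMaximumMatching' [Finite α] (hM : IsPerfectMatching' G M)
    (hN : IsMaximumMatching' G N) : IsPerfectMatching' G N := by
  classical
  have := Fintype.ofFinite α
  have hcard := hN.2 M hM.1
  refine ⟨hN.1, biUnion_toFinset_eq_univ_iff.1 (Finset.eq_univ_of_card _ ?_)⟩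
  have hMcard := card_biUnion_toFinset hM.1
  rw [biUnion_toFinset_eq_univ_iff.2 hM.2, Finset.card_univ] at hMcard
  refine le_antisymm (Finset.card_le_univ _) ?_
  rw [hMcard, card_biUnion_toFinset hN.1]
  omega

theorem IsPerfectMatching'.exists_isPartner (hM : IsPerfectMatching' G M) :
    ∃ f : Equiv.Perm α, IsMatchingPerm G f ∧ IsPartner M f := by
  have hpartner (x : α) : ∃ y, s(x, y) ∈ M := by
    obtain ⟨e, he, hx⟩ := hM.2 x
    obtain ⟨y, rfl⟩ := Sym2.mem_iff_exists.1 hx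
    exact ⟨y, he⟩
  choose f hf using hpartner
  have hfM : IsPartner M f := by
    refine fun x y => ⟨fun hxy => ?_, fun h => h ▸ hf x⟩
    by_contra hne
    exact hM.1.2 _ (hf x) _ hxy (fun h => hne (Sym2.congr_right.1 h)) x (Sym2.mem_mk_left _ _)
      (Sym2.mem_mk_left _ _)
  have hinv : Function.Involutive f := fun x => (hfM _ _).1 (Sym2.eq_swap ▸ hf x)
  exact ⟨hinv.toPerm, ⟨hinv, fun x => hM.1.1 _ (hf x)⟩, hfM⟩

end PerfectMatching

/-- For a graph with a perfect matching `M`, every vertex of `V_SD(G)` belongs to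
some `M`-Jposy (for this particular perfect matching `M`). -/
theorem inJposy_of_VSD (G : SimpleGraph V) (M : Finset (Sym2 V))
    (hM : IsPerfectMatching' G M) (v : V) (hv : v ∈ VSD G) :
    InJposy G M v := by
  obtain ⟨N, hN, hvN⟩ := hv
  have hN' := hM.of_isMaximumMatching' hN
  obtain ⟨f, hf, hfN⟩ := hN'.exists_isPartner
  obtain ⟨g, hg, hgM⟩ := hM.exists_isPartner
  exact (hg.isJposyVertex_iff_inJposy hM.1 hgM).1
    (((hf.isJposyVertex_iff_inJposy hN.1 hfN).2 hvN).of_isMatchingPerm hf hg)
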